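/- (Shoda) Let V be a finite-dimensional vector space over the field F = GF(2) (the field with two elements) and let f : V → V be a nilpotent linear operator. Then the following are equivalent: (1) there exists a characteristic subspace of V for f that is not hyperinvariant for f; (2) there exist positive integers r and s with s > r + 1 such that the Jordan form of f contains exactly one Jordan block of size s and exactly one Jordan block of size r, i.e., 2·dim ker(f^s) − dim ker(f^{s−1}) − dim ker(f^{s+1}) = 1 and 2·dim ker(f^r) − dim ker(f^{r−1}) − dim ker(f^{r+1}) = 1. -/

import Mathlib

/-- A subspace `Y` is hyperinvariant for `f` if `g Y ⊆ Y` for every endomorphism `g`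
commuting with `f`. -/
def HyperinvariantSubspace {F V : Type*} [Field F] [AddCommGroup V] [Module F V]
    (f : Module.End F V) (Y : Submodule F V) : Prop :=
  ∀ g : Module.End F V, Commute g f → ∀ x ∈ Y, g x ∈ Y

/-- A subspace `Y` is characteristic for `f` if it is `f`-invariant and `g Y ⊆ Y` for every
invertible endomorphism `g` commuting with `f`. -/
def CharacteristicSubspace {F V : Type*} [Field F] [AddCommGroup V] [Module F V]
    (f : Module.End F V) (Y : Submodule F V) : Prop :=
  (∀ x ∈ Y, f x ∈ Y) ∧
    ∀ g : Module.End F V, IsUnit g → Commute g f → ∀ x ∈ Y, g x ∈ Y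

open Polynomial
open scoped DirectSum

lemma modDecomp {R M : Type*} [CommRing R] [AddCommGroup M] [Module R M] (p : R) (d : ℕ)
    (k : Fin d → ℕ) (e : M ≃ₗ[R] ⨁ i : Fin d, R ⧸ Submodule.span R {p ^ (k i : ℕ)}) :
    ∃ (u : Fin d → M) (π : Fin d → M →ₗ[R] M),
      (∀ v, ∑ i, π i v = v) ∧ (∀ i j, i ≠ j → ∀ v, π i (π j v) = 0) ∧
      (∀ i v, ∃ a : R, π i v = a • u i) ∧ (∀ i, π i (u i) = u i) ∧
      (∀ i (a : R), a • u i = 0 ↔ p ^ k i ∣ a) ∧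
      (∀ i w, p ^ k i • w = 0 → ∃ g : M →ₗ[R] M, g (u i) = w ∧ ∀ v, g (π i v) = g v) := by
  classical
  refine ⟨fun i => e.symm (DirectSum.lof R _ _ i (Submodule.Quotient.mk 1)),
    fun i => e.symm.toLinearMap ∘ₗ DirectSum.lof R _ _ i ∘ₗ DirectSum.component R _ _ i ∘ₗ
      e.toLinearMap, ?_, ?_, ?_, ?_, ?_, ?_⟩
  · intro v
    apply e.injective
    simp only [map_sum, LinearMap.comp_apply, LinearEquiv.coe_coe, LinearEquiv.apply_symm_apply]
    apply DFinsupp.ext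
    intro j
    rw [DFinsupp.finsetSum_apply, Finset.sum_eq_single j]
    · exact DFinsupp.single_eq_same
    · intro b _ hb
      exact DFinsupp.single_eq_of_ne (Ne.symm hb)
    · simp
  · intro i j hij v
    simp only [LinearMap.comp_apply, LinearEquiv.coe_coe, LinearEquiv.apply_symm_apply]
    rw [DirectSum.component.of, dif_neg (Ne.symm hij)]
    simp
  · intro i v
    obtain ⟨a, ha⟩ := Submodule.Quotient.mk_surjective _ (DirectSum.component R _ _ i (e v))
    refine ⟨a, ?_⟩
    simp only [LinearMap.comp_apply, LinearEquiv.coe_coe]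
    rw [← ha, ← map_smul, ← map_smul, ← Submodule.Quotient.mk_smul]
    simp
  · intro i
    simp only [LinearMap.comp_apply, LinearEquiv.coe_coe, LinearEquiv.apply_symm_apply]
    rw [DirectSum.component.lof_self]
  · intro i a
    rw [← map_smul, ← map_smul, ← Submodule.Quotient.mk_smul, LinearEquiv.map_eq_zero_iff]
    have : Function.Injective (DirectSum.lof R (Fin d) (fun i => R ⧸ Submodule.span R {p ^ (k i : ℕ)}) i) :=
      Function.LeftInverse.injective (g := DirectSum.component R (Fin d) (fun i => R ⧸ Submodule.span R {p ^ (k i : ℕ)}) i)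
        (fun x => DirectSum.component.lof_self R _ _)
    rw [map_eq_zero_iff _ this, Submodule.Quotient.mk_eq_zero, Submodule.mem_span_singleton]
    simp only [smul_eq_mul, mul_one]
    exact ⟨fun ⟨c, hc⟩ => ⟨c, by rw [← hc, mul_comm]⟩, fun ⟨c, hc⟩ => ⟨c, by rw [hc, mul_comm]⟩⟩
  · intro i w hw
    refine ⟨(Submodule.span R {p ^ (k i : ℕ)}).liftQ (LinearMap.toSpanSingleton R M w) ?_ ∘ₗ
      DirectSum.component R _ _ i ∘ₗ e.toLinearMap, ?_, ?_⟩
    · rw [Submodule.span_singleton_le_iff_mem]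
      simpa using hw
    · simp only [LinearMap.comp_apply, LinearEquiv.coe_coe, LinearEquiv.apply_symm_apply]
      rw [DirectSum.component.lof_self, Submodule.liftQ_apply]
      simp
    · intro v
      simp only [LinearMap.comp_apply, LinearEquiv.coe_coe, LinearEquiv.apply_symm_apply]
      rw [DirectSum.component.lof_self]

/-- A Jordan decomposition of `f`. -/
structure JD {F V : Type*} [Field F] [AddCommGroup V] [Module F V]
    (f : Module.End F V) (d : ℕ) (t : Fin d → ℕ) (u : Fin d → V) (π : Fin d → Module.End F V) :
    Prop where
  comm : ∀ i, Commute (π i) f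
  sum : ∀ v, ∑ i, π i v = v
  orth : ∀ i j, i ≠ j → ∀ v, π i (π j v) = 0
  cyc : ∀ i v, ∃ a : F[X], π i v = aeval f a (u i)
  fix : ∀ i, π i (u i) = u i
  ann : ∀ i (a : F[X]), aeval f a (u i) = 0 ↔ X ^ t i ∣ a
  hom : ∀ i w, (f ^ t i) w = 0 → ∃ g : Module.End F V, Commute g f ∧ g (u i) = w ∧
    ∀ v, g (π i v) = g v

/-- transfer -/
noncomputable def tr {F V : Type*} [Field F] [AddCommGroup V] [Module F V]
    (f : Module.End F V) (g : Module.AEval' f →ₗ[F[X]] Module.AEval' f) : Module.End F V :=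
  (Module.AEval'.of f).symm.toLinearMap ∘ₗ g.restrictScalars F ∘ₗ (Module.AEval'.of f).toLinearMap

lemma tr_apply {F V : Type*} [Field F] [AddCommGroup V] [Module F V]
    (f : Module.End F V) (g : Module.AEval' f →ₗ[F[X]] Module.AEval' f) (v : V) :
    tr f g v = (Module.AEval'.of f).symm (g (Module.AEval'.of f v)) := rfl

lemma tr_comm {F V : Type*} [Field F] [AddCommGroup V] [Module F V]
    (f : Module.End F V) (g : Module.AEval' f →ₗ[F[X]] Module.AEval' f) : Commute (tr f g) f := by
  ext v
  rw [Module.End.mul_apply, Module.End.mul_apply, tr_apply, tr_apply]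
  have := Module.AEval.X_smul_of (R := F) (a := f) v
  rw [Module.End.smul_def] at this
  rw [← this, map_smul, Module.AEval.of_symm_X_smul]
  rfl

lemma exists_JD {F V : Type*} [Field F] [AddCommGroup V] [Module F V] [FiniteDimensional F V]
    (f : Module.End F V) (hf : IsNilpotent f) : ∃ d t u π, JD f d t u π := by
  obtain ⟨n, hn⟩ := hf
  have htor : Module.IsTorsion' (Module.AEval' f) (Submonoid.powers (X : F[X])) := by
    intro x
    obtain ⟨v, rfl⟩ := (Module.AEval'.of f).surjective x
    refine ⟨⟨X ^ n, n, rfl⟩, ?_⟩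
    change (X ^ n : F[X]) • (Module.AEval'.of f v) = 0
    rw [Module.AEval.X_pow_smul_of, hn]
    simp
  obtain ⟨d, t, ⟨e⟩⟩ := Module.torsion_by_prime_power_decomposition irreducible_X htor
  obtain ⟨u, π, h1, h2, h3, h4, h5, h6⟩ := modDecomp _ d t e
  refine ⟨d, t, fun i => (Module.AEval'.of f).symm (u i), fun i => tr f (π i), ?_, ?_, ?_, ?_, ?_, ?_, ?_⟩
  · exact fun i => tr_comm f _
  · exact h1
  · exact h2
  · exact h3
  · exact h4
  · exact h5
  · intro i w hw
    obtain ⟨g, hg1, hg2⟩ := h6 i (Module.AEval'.of f w) (by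
      rw [Module.AEval.X_pow_smul_of, Module.End.smul_def, hw, map_zero])
    exact ⟨tr f g, tr_comm f g, hg1, hg2⟩

lemma comm_aeval {F V : Type*} [Field F] [AddCommGroup V] [Module F V]
    {f g : Module.End F V} (h : Commute g f) (a : F[X]) (v : V) :
    g (aeval f a v) = aeval f a (g v) := by
  have : Commute g (aeval f a) := by
    induction a using Polynomial.induction_on' with
    | add p q hp hq => rw [map_add]; exact hp.add_right hq
    | monomial n c =>
      rw [aeval_monomial]
      have hc : Commute g (algebraMap F (Module.End F V) c) := (Algebra.commutes c g).symm
      exact hc.mul_right (h.pow_right n)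
  exact LinearMap.congr_fun this.eq v

lemma comm_pow_apply {F V : Type*} [Field F] [AddCommGroup V] [Module F V]
    {f g : Module.End F V} (h : Commute g f) (k : ℕ) (v : V) :
    g ((f ^ k) v) = (f ^ k) (g v) :=
  LinearMap.congr_fun (h.pow_right k).eq v

lemma aeval_mul_apply {F V : Type*} [Field F] [AddCommGroup V] [Module F V]
    (f : Module.End F V) (a b : F[X]) (v : V) :
    aeval f (a * b) v = aeval f a (aeval f b v) := by
  rw [map_mul, Module.End.mul_apply]

lemma aeval_Xpow_apply {F V : Type*} [Field F] [AddCommGroup V] [Module F V]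
    (f : Module.End F V) (k : ℕ) (v : V) :
    aeval f (X ^ k : F[X]) v = (f ^ k) v := by
  rw [aeval_X_pow]

namespace JD

variable {F V : Type*} [Field F] [AddCommGroup V] [Module F V]
    {f : Module.End F V} {d : ℕ} {t : Fin d → ℕ} {u : Fin d → V} {π : Fin d → Module.End F V}

lemma pi_u_ne (J : JD f d t u π) {i j : Fin d} (h : i ≠ j) : π i (u j) = 0 := by
  rw [← J.fix j]; exact J.orth i j h _

lemma finrank_ker (J : JD f d t u π) (k : ℕ) :
    Module.finrank F (LinearMap.ker (f ^ k)) = ∑ i, min k (t i) := by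
  classical
  let L : ((i : Fin d) → degreeLT F (min k (t i))) →ₗ[F] V :=
    { toFun := fun p => ∑ i, aeval f (X ^ (t i - min k (t i)) * (p i : F[X])) (u i)
      map_add' := by
        intro p q
        simp [mul_add, Finset.sum_add_distrib]
      map_smul' := by
        intro c p
        simp [Finset.smul_sum] }
  have hL : ∀ p, L p = ∑ i, aeval f (X ^ (t i - min k (t i)) * (p i : F[X])) (u i) := fun _ => rfl
  have hinj : Function.Injective L := by
    rw [← LinearMap.ker_eq_bot, LinearMap.ker_eq_bot']
    intro p hp
    funext i
    have h1 := congrArg (π i) hp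
    rw [hL, map_sum, Finset.sum_eq_single i] at h1
    · rw [comm_aeval (J.comm i), J.fix, map_zero, J.ann] at h1
      have e : t i = (t i - min k (t i)) + min k (t i) := by omega
      have e' : (X : F[X]) ^ t i = X ^ (t i - min k (t i)) * X ^ min k (t i) := by
        rw [← pow_add, ← e]
      rw [e'] at h1
      have h2 := (mul_dvd_mul_iff_left (pow_ne_zero _ X_ne_zero)).1 h1
      apply Subtype.ext
      by_contra hne
      have h3 := Polynomial.degree_le_of_dvd h2 hne
      have h4 := Polynomial.mem_degreeLT.1 (p i).2
      rw [degree_X_pow] at h3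
      exact absurd h4 (not_lt.2 h3)
    · intro j _ hj
      rw [comm_aeval (J.comm i), J.pi_u_ne hj.symm, map_zero]
    · simp
  have hrange : LinearMap.range L = LinearMap.ker (f ^ k) := by
    apply le_antisymm
    · rintro _ ⟨p, rfl⟩
      rw [LinearMap.mem_ker, hL, map_sum]
      apply Finset.sum_eq_zero
      intro i _
      rw [← aeval_Xpow_apply, ← aeval_mul_apply, J.ann, ← mul_assoc, ← pow_add]
      exact Dvd.dvd.mul_right (pow_dvd_pow _ (by omega)) _
    · intro v hv
      have : ∀ i, ∃ p : degreeLT F (min k (t i)),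
          π i v = aeval f (X ^ (t i - min k (t i)) * (p : F[X])) (u i) := by
        intro i
        obtain ⟨a, ha⟩ := J.cyc i v
        have h1 : X ^ t i ∣ X ^ k * a := by
          rw [← J.ann, aeval_mul_apply, ← ha, aeval_Xpow_apply, ← comm_pow_apply (J.comm i),
            LinearMap.mem_ker.1 hv, map_zero]
        have h2 : X ^ (t i - min k (t i)) ∣ a := by
          rcases le_total (t i) k with h | h
          · rw [min_eq_right h]; simp
          · rw [min_eq_left h]
            have e : t i = k + (t i - k) := by omega
            rw [e, pow_add] at h1
            exact (mul_dvd_mul_iff_left (pow_ne_zero _ X_ne_zero)).1 h1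
        obtain ⟨b, rfl⟩ := h2
        refine ⟨⟨b %ₘ (X ^ (min k (t i))), ?_⟩, ?_⟩
        · rw [Polynomial.mem_degreeLT]
          have := Polynomial.degree_modByMonic_lt b (monic_X_pow (R := F) (min k (t i)))
          rwa [degree_X_pow] at this
        · rw [ha, ← sub_eq_zero, ← LinearMap.sub_apply, ← map_sub, J.ann, ← mul_sub]
          have e : t i = (t i - min k (t i)) + min k (t i) := by omega
          nth_rewrite 1 [e]
          rw [pow_add]
          apply mul_dvd_mul_left
          refine ⟨b /ₘ (X ^ (min k (t i))), ?_⟩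
          have := Polynomial.modByMonic_add_div b (X ^ (min k (t i)))
          linear_combination -this
      choose p hp using this
      refine ⟨p, ?_⟩
      rw [hL, ← J.sum v]
      exact Finset.sum_congr rfl (fun i _ => (hp i).symm)
  rw [← hrange, LinearMap.finrank_range_of_inj hinj]
  have : ∀ n, Module.finrank F (degreeLT F n) = n := fun n => by
    rw [(degreeLTEquiv F n).finrank_eq]; simp
  have hfin : ∀ n, Module.Finite F (degreeLT F n) := fun n =>
    Module.Finite.equiv (degreeLTEquiv F n).symm
  have hfree : ∀ n, Module.Free F (degreeLT F n) := fun n => inferInstance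
  rw [Module.finrank_pi_fintype]
  simp [this]

lemma count (J : JD f d t u π) {k : ℕ} (hk : 0 < k) :
    2 * Module.finrank F (LinearMap.ker (f ^ k)) =
      Module.finrank F (LinearMap.ker (f ^ (k - 1))) +
        Module.finrank F (LinearMap.ker (f ^ (k + 1))) + 1 ↔ ∃ i, ∀ j, t j = k ↔ j = i := by
  classical
  rw [J.finrank_ker, J.finrank_ker, J.finrank_ker]
  have h : 2 * ∑ i, min k (t i) = ∑ i, min (k - 1) (t i) + ∑ i, min (k + 1) (t i) +
      (Finset.univ.filter (fun j => t j = k)).card := by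
    rw [Finset.card_filter, Finset.mul_sum, ← Finset.sum_add_distrib, ← Finset.sum_add_distrib]
    apply Finset.sum_congr rfl
    intro i _
    split_ifs <;> omega
  have h2 : (2 * ∑ i, min k (t i) = ∑ i, min (k - 1) (t i) + ∑ i, min (k + 1) (t i) + 1) ↔
      (Finset.univ.filter (fun j => t j = k)).card = 1 := by omega
  rw [h2, Finset.card_eq_one]
  simp [Finset.ext_iff]

end JD

lemma poly_cmp {F : Type*} [Field F] (a b : F[X]) (n : ℕ) :
    (∃ c, X ^ n ∣ a - c * b) ∨ (∃ c, X ^ n ∣ b - c * (X * a)) := by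
  have key : ∀ (k l : ℕ) (a' b' : F[X]), ¬ X ∣ b' → l ≤ k →
      ∃ c, X ^ n ∣ X ^ k * a' - c * (X ^ l * b') := by
    intro k l a' b' hb hkl
    have hc : IsCoprime b' ((X : F[X]) ^ n) := by
      apply IsCoprime.pow_right
      exact ((irreducible_X.coprime_iff_not_dvd).2 hb).symm
    obtain ⟨x, y, hxy⟩ := hc
    refine ⟨X ^ (k - l) * a' * x, X ^ k * a' * y, ?_⟩
    have e : (X : F[X]) ^ k = X ^ (k - l) * X ^ l := by
      rw [← pow_add]; congr 1; omega
    rw [e]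
    linear_combination (-(X ^ (k - l) * X ^ l * a')) * hxy
  have fac : ∀ a : F[X], a ≠ 0 → ∃ k a', ¬ X ∣ a' ∧ a = X ^ k * a' := by
    intro a ha
    obtain ⟨k, a', h1, h2⟩ := WfDvdMonoid.max_power_factor ha (irreducible_X (R := F))
    exact ⟨k, a', h1, h2⟩
  by_cases ha : a = 0
  · left; exact ⟨0, by simp [ha]⟩
  by_cases hb : b = 0
  · right; exact ⟨0, by simp [hb]⟩
  obtain ⟨k, a', ha', rfl⟩ := fac a ha
  obtain ⟨l, b', hb', rfl⟩ := fac b hb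
  rcases le_or_gt l k with h | h
  · left; exact key k l a' b' hb' h
  · right
    obtain ⟨c, hc⟩ := key l (k + 1) b' a' ha' h
    refine ⟨c, ?_⟩
    rw [← mul_assoc X, ← pow_succ']
    exact hc

lemma Characteristic_aeval {F V : Type*} [Field F] [AddCommGroup V] [Module F V]
    {f : Module.End F V} {Y : Submodule F V} (hY : CharacteristicSubspace f Y) (a : F[X])
    {y : V} (hy : y ∈ Y) : aeval f a y ∈ Y := by
  induction a using Polynomial.induction_on' with
  | add p q hp hq => rw [map_add, LinearMap.add_apply]; exact Y.add_mem hp hq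
  | monomial n c =>
    rw [aeval_monomial, Module.End.mul_apply, Module.algebraMap_end_apply]
    apply Y.smul_mem
    induction n with
    | zero => simpa using hy
    | succ n ih => rw [pow_succ', Module.End.mul_apply]; exact hY.1 _ ih

lemma Characteristic_nil {F V : Type*} [Field F] [AddCommGroup V] [Module F V]
    {f : Module.End F V} {Y : Submodule F V} (hY : CharacteristicSubspace f Y)
    (g : Module.End F V) (hg : Commute g f) (h2 : ∀ v, g (g v) = 0)
    {y : V} (hy : y ∈ Y) : g y ∈ Y := by
  have hn : IsNilpotent g := ⟨2, by ext v; rw [pow_two, Module.End.mul_apply, h2]; rfl⟩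
  have h := hY.2 (1 + g) hn.isUnit_one_add ((Commute.one_left f).add_left hg) y hy
  rw [LinearMap.add_apply, Module.End.one_apply] at h
  exact (Y.add_mem_iff_right hy).1 h

namespace JD

variable {F V : Type*} [Field F] [AddCommGroup V] [Module F V]
    {f : Module.End F V} {d : ℕ} {t : Fin d → ℕ} {u : Fin d → V} {π : Fin d → Module.End F V}
    {Y : Submodule F V}

lemma offdiag (J : JD f d t u π) (hY : CharacteristicSubspace f Y) {i j : Fin d} (hij : i ≠ j)
    (g : Module.End F V) (hg : Commute g f) {y : V} (hy : y ∈ Y) : π j (g (π i y)) ∈ Y := by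
  have := Characteristic_nil hY (π j * g * π i) (((J.comm j).mul_left hg).mul_left (J.comm i))
    (by
      intro v
      simp only [Module.End.mul_apply]
      rw [J.orth i j hij, map_zero, map_zero]) hy
  exact this

lemma transport (J : JD f d t u π) (hY : CharacteristicSubspace f Y) {i j : Fin d} (hij : i ≠ j)
    {y : V} (hy : y ∈ Y) {a : F[X]} (ha : π i y = aeval f a (u i)) {w : V} (hw : π j w = w)
    (hw2 : (f ^ t i) w = 0) : aeval f a w ∈ Y := by
  obtain ⟨g, hg, hgu, -⟩ := J.hom i w hw2
  have := J.offdiag hY hij g hg hy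
  rwa [ha, comm_aeval hg, hgu, comm_aeval (J.comm j), hw] at this

lemma pow_u (J : JD f d t u π) {i : Fin d} {k : ℕ} : (f ^ k) (u i) = 0 ↔ t i ≤ k := by
  rw [← aeval_Xpow_apply, J.ann]
  exact pow_dvd_pow_iff X_ne_zero (Prime.not_isUnit prime_X)

lemma mult2 (J : JD f d t u π) (hY : CharacteristicSubspace f Y) {i j : Fin d} (hij : i ≠ j)
    (ht : t i = t j) {y : V} (hy : y ∈ Y) : π i y ∈ Y := by
  obtain ⟨a, ha⟩ := J.cyc i y
  have h1 := J.transport hY hij hy ha (J.fix j) (J.pow_u.2 ht.ge)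
  have h2 := J.transport hY hij.symm h1 (a := a)
    (by rw [comm_aeval (J.comm j), J.fix]) (J.fix i) (J.pow_u.2 ht.le)
  rwa [ha]

lemma good (J : JD f d t u π) (hY : CharacteristicSubspace f Y) {i : Fin d}
    (h : t i = 0 ∨ ∃ j, j ≠ i ∧ t j = t i) {y : V} (hy : y ∈ Y) : π i y ∈ Y := by
  rcases h with h | ⟨j, hj, h⟩
  · obtain ⟨a, ha⟩ := J.cyc i y
    rw [ha, (J.ann i a).2 (by rw [h]; simp)]
    exact Y.zero_mem
  · exact J.mult2 hY hj.symm h.symm hy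

lemma adj (J : JD f d t u π) (hY : CharacteristicSubspace f Y) {i j : Fin d}
    (ht : t j = t i + 1) {y : V} (hy : y ∈ Y) (hz : π i y + π j y ∈ Y) : π i y ∈ Y := by
  have hij : i ≠ j := by rintro rfl; omega
  obtain ⟨a, ha⟩ := J.cyc i y
  obtain ⟨b, hb⟩ := J.cyc j y
  have h1 := J.transport hY hij.symm hy hb (J.fix i) (J.pow_u.2 (by omega))
  have h2 := J.transport hY hij hy ha (w := f (u j))
    (by
      have := comm_pow_apply (J.comm j) 1 (u j)
      simpa [J.fix] using this)
    (by
      have : (f ^ (t i + 1)) (u j) = 0 := J.pow_u.2 ht.le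
      rwa [pow_succ, Module.End.mul_apply] at this)
  have h3 : aeval f (X * a) (u j) ∈ Y := by
    rw [mul_comm, aeval_mul_apply, aeval_X]; exact h2
  rcases poly_cmp a b (t j) with ⟨c, hc⟩ | ⟨c, hc⟩
  · have h4 : aeval f (a - c * b) (u i) = 0 :=
      (J.ann i _).2 (dvd_trans (pow_dvd_pow _ (by omega)) hc)
    rw [map_sub, LinearMap.sub_apply, sub_eq_zero] at h4
    rw [ha, h4, aeval_mul_apply]
    exact Characteristic_aeval hY _ h1
  · have h4 : aeval f (b - c * (X * a)) (u j) = 0 := (J.ann j _).2 hc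
    rw [map_sub, LinearMap.sub_apply, sub_eq_zero] at h4
    refine (Y.add_mem_iff_left (y := π j y) ?_).1 hz
    rw [hb, h4, aeval_mul_apply]
    exact Characteristic_aeval hY _ h3

lemma allgood (J : JD f d t u π) (hY : CharacteristicSubspace f Y)
    (hno : ∀ i j, (∀ k, t k = t i → k = i) → (∀ k, t k = t j → k = j) → 0 < t i →
      ¬ (t i + 1 < t j)) (i : Fin d) {y : V} (hy : y ∈ Y) : π i y ∈ Y := by
  classical
  by_cases hi : t i = 0 ∨ ∃ j, j ≠ i ∧ t j = t i
  · exact J.good hY hi hy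
  by_cases hj : ∃ j, j ≠ i ∧ ¬ (t j = 0 ∨ ∃ k, k ≠ j ∧ t k = t j)
  · obtain ⟨j, hji, hj⟩ := hj
    push Not at hi hj
    have ui : ∀ k, t k = t i → k = i := fun k hk => by
      by_contra h; exact hi.2 k h hk
    have uj : ∀ k, t k = t j → k = j := fun k hk => by
      by_contra h; exact hj.2 k h hk
    have n1 := hno i j ui uj (Nat.pos_of_ne_zero hi.1)
    have n2 := hno j i uj ui (Nat.pos_of_ne_zero hj.1)
    have n3 := hi.2 j hji
    have hz : π i y + π j y ∈ Y := by
      have hs := J.sum y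
      rw [← Finset.sum_erase_add _ _ (Finset.mem_univ i),
        ← Finset.sum_erase_add _ _ (Finset.mem_erase.2 ⟨hji, Finset.mem_univ j⟩)] at hs
      have hrest : ∑ x ∈ (Finset.univ.erase i).erase j, π x y ∈ Y := by
        apply Y.sum_mem
        intro k hk
        rw [Finset.mem_erase, Finset.mem_erase] at hk
        by_cases hkg : t k = 0 ∨ ∃ l, l ≠ k ∧ t l = t k
        · exact J.good hY hkg hy
        · exfalso
          push Not at hkg
          have uk : ∀ l, t l = t k → l = k := fun l hl => by
            by_contra h; exact hkg.2 l h hl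
          have m1 := hno i k ui uk (Nat.pos_of_ne_zero hi.1)
          have m2 := hno k i uk ui (Nat.pos_of_ne_zero hkg.1)
          have m3 := hno j k uj uk (Nat.pos_of_ne_zero hj.1)
          have m4 := hno k j uk uj (Nat.pos_of_ne_zero hkg.1)
          have m5 := hi.2 k hk.2.1
          have m6 := hj.2 k hk.1
          omega
      rw [add_assoc, add_comm (π j y)] at hs
      rw [← Y.add_mem_iff_right hrest, hs]
      exact hy
    have : t j = t i + 1 ∨ t i = t j + 1 := by omega
    rcases this with h | h
    · exact J.adj hY h hy hz
    · have hj' := J.adj hY h hy (by rwa [add_comm])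
      exact (Y.add_mem_iff_left hj').1 hz
  · push Not at hj
    have hs := J.sum y
    rw [← Finset.sum_erase_add _ _ (Finset.mem_univ i)] at hs
    have hrest : ∑ x ∈ Finset.univ.erase i, π x y ∈ Y := by
      apply Y.sum_mem
      intro k hk
      rw [Finset.mem_erase] at hk
      apply J.good hY _ hy
      rcases Nat.eq_zero_or_pos (t k) with h | h
      · exact Or.inl h
      · exact hj k hk.1
    rw [← Y.add_mem_iff_right hrest, hs]
    exact hy

lemma hyper (J : JD f d t u π) (hY : CharacteristicSubspace f Y)
    (hall : ∀ i, ∀ y ∈ Y, π i y ∈ Y) : HyperinvariantSubspace f Y := by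
  intro g hg y hy
  rw [← J.sum (g y)]
  apply Y.sum_mem
  intro i _
  rw [← J.sum y, map_sum, map_sum]
  apply Y.sum_mem
  intro j _
  by_cases hij : j = i
  · subst hij
    obtain ⟨a, ha⟩ := J.cyc j y
    obtain ⟨b, hb⟩ := J.cyc j (g (u j))
    rw [ha, comm_aeval hg, comm_aeval (J.comm j), hb, ← aeval_mul_apply, mul_comm,
      aeval_mul_apply, ← ha]
    exact Characteristic_aeval hY _ (hall j y hy)
  · exact J.offdiag hY hij g hg hy

end JD

namespace JD

lemma ker_pi {F V : Type*} [Field F] [AddCommGroup V] [Module F V]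
    {f : Module.End F V} {d : ℕ} {t : Fin d → ℕ} {u : Fin d → V} {π : Fin d → Module.End F V}
    (J : JD f d t u π) {k : Fin d} {v : V} {m : ℕ} (hm : m ≤ t k) (h : (f ^ m) (π k v) = 0) :
    ∃ w, π k v = (f ^ (t k - m)) w := by
  obtain ⟨a, ha⟩ := J.cyc k v
  rw [ha, ← aeval_Xpow_apply, ← aeval_mul_apply, J.ann] at h
  have e : (X : F[X]) ^ t k = X ^ m * X ^ (t k - m) := by
    rw [← pow_add]; congr 1; omega
  rw [e] at h
  obtain ⟨b, rfl⟩ := (mul_dvd_mul_iff_left (pow_ne_zero _ X_ne_zero)).1 h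
  exact ⟨aeval f b (u k), by rw [ha, aeval_mul_apply, aeval_Xpow_apply]⟩

lemma pow_t_pi {F V : Type*} [Field F] [AddCommGroup V] [Module F V]
    {f : Module.End F V} {d : ℕ} {t : Fin d → ℕ} {u : Fin d → V} {π : Fin d → Module.End F V}
    (J : JD f d t u π) {k : Fin d} (v : V) {m : ℕ} (hm : t k ≤ m) : (f ^ m) (π k v) = 0 := by
  obtain ⟨a, ha⟩ := J.cyc k v
  rw [ha, ← aeval_Xpow_apply, ← aeval_mul_apply, J.ann]
  exact Dvd.dvd.mul_right (pow_dvd_pow _ hm) _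

lemma powpow {F V : Type*} [Field F] [AddCommGroup V] [Module F V]
    (f : Module.End F V) (a b : ℕ) (v : V) : (f ^ a) ((f ^ b) v) = (f ^ (a + b)) v := by
  rw [pow_add, Module.End.mul_apply]

variable {V : Type*} [AddCommGroup V] [Module (ZMod 2) V]
    {f : Module.End (ZMod 2) V} {d : ℕ} {t : Fin d → ℕ} {u : Fin d → V}
    {π : Fin d → Module.End (ZMod 2) V}

lemma split_cyc (J : JD f d t u π) (i : Fin d) (v : V) :
    ∃ w, π i v = f w ∨ π i v = u i + f w := by
  obtain ⟨a, ha⟩ := J.cyc i v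
  refine ⟨aeval f a.divX (u i), ?_⟩
  have h : aeval f a (u i) = a.coeff 0 • u i + f (aeval f a.divX (u i)) := by
    nth_rewrite 1 [← Polynomial.X_mul_divX_add a]
    rw [map_add, LinearMap.add_apply, aeval_mul_apply, aeval_X, aeval_C,
      Module.algebraMap_end_apply, add_comm]
  rw [ha, h]
  have h01 : ∀ c : ZMod 2, c = 0 ∨ c = 1 := by decide
  rcases h01 (a.coeff 0) with h | h
  · left; rw [h, zero_smul, zero_add]
  · right; rw [h, one_smul]

lemma single_split (J : JD f d t u π) (S : Submodule (ZMod 2) V) (i : Fin d) (x p : V)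
    (h1 : ∀ k, k ≠ i → π k x ∈ S) (h2 : π i x ∈ S ∨ π i x - p ∈ S) : x ∈ S ∨ x - p ∈ S := by
  classical
  have hs := J.sum x
  rw [← Finset.sum_erase_add _ _ (Finset.mem_univ i)] at hs
  have hrest : ∑ k ∈ Finset.univ.erase i, π k x ∈ S := by
    apply S.sum_mem
    intro k hk
    exact h1 k (Finset.mem_erase.1 hk).1
  rcases h2 with h2 | h2
  · left; rw [← hs]; exact S.add_mem hrest h2
  · right; rw [← hs, add_sub_assoc]; exact S.add_mem hrest h2

lemma Pdec (J : JD f d t u π) {m : ℕ} {i : Fin d} (hi : ∀ k, t k = m + 1 ↔ k = i) {v : V}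
    (hv : (f ^ (m + 1)) v = 0) :
    (f ^ m) v ∈ LinearMap.ker f ⊓ LinearMap.range (f ^ (m + 1)) ∨
    (f ^ m) v - (f ^ m) (u i) ∈ LinearMap.ker f ⊓ LinearMap.range (f ^ (m + 1)) := by
  have hpk : ∀ k, (f ^ (m + 1)) (π k v) = 0 := fun k => by
    rw [← comm_pow_apply (J.comm k), hv, map_zero]
  apply J.single_split _ i
  · intro k hk
    rw [comm_pow_apply (J.comm k)]
    have hne : t k ≠ m + 1 := fun h => hk ((hi k).1 h)
    rcases Nat.lt_or_gt_of_ne hne with h | h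
    · rw [J.pow_t_pi v (by omega)]; exact Submodule.zero_mem _
    · obtain ⟨w, hw⟩ := J.ker_pi h.le (hpk k)
      refine ⟨?_, ?_⟩
      · rw [SetLike.mem_coe, LinearMap.mem_ker, ← Module.End.mul_apply, ← pow_succ', hpk]
      · refine ⟨(f ^ (t k - (m + 1) - 1)) w, ?_⟩
        rw [hw, powpow, powpow]
        congr 2; omega
  · rw [comm_pow_apply (J.comm i)]
    obtain ⟨w, hw⟩ := J.split_cyc i v
    have hti := (hi i).2 rfl
    have hz : (f ^ m) (f (π i w)) = 0 := by
      rw [← Module.End.mul_apply, ← pow_succ]; exact J.pow_t_pi w (by omega)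
    have hfi : π i (f w) = f (π i w) := LinearMap.congr_fun (J.comm i).eq w
    have hpp : π i (π i v) = π i v := by
      obtain ⟨a, ha⟩ := J.cyc i v
      rw [ha, comm_aeval (J.comm i), J.fix]
    rcases hw with hw | hw
    · left
      rw [← hpp, hw, hfi, hz]; exact Submodule.zero_mem _
    · right
      rw [← hpp, hw, map_add, J.fix, hfi, map_add, hz, add_zero, sub_self]
      exact Submodule.zero_mem _

lemma Qdec (J : JD f d t u π) {m n : ℕ} {j : Fin d} (hj : ∀ k, t k = m + n + 3 ↔ k = j) {v : V}
    (hv : (f ^ (m + n + 3)) v = 0) (S : Submodule (ZMod 2) V)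
    (hS : S = (LinearMap.ker (f ^ (n + 1)) ⊓ LinearMap.range (f ^ (m + 1))) ⊔
      (LinearMap.ker (f ^ (n + 2)) ⊓ LinearMap.range (f ^ (m + 2)))) :
    (f ^ (m + 1)) v ∈ S ∨ (f ^ (m + 1)) v - (f ^ (m + 1)) (u j) ∈ S := by
  have hpk : ∀ k, (f ^ (m + n + 3)) (π k v) = 0 := fun k => by
    rw [← comm_pow_apply (J.comm k), hv, map_zero]
  have S1 : ∀ w, (f ^ (m + n + 2)) w = 0 → (f ^ (m + 1)) w ∈ S := by
    intro w hw
    rw [hS]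
    apply Submodule.mem_sup_left
    refine ⟨?_, ⟨w, rfl⟩⟩
    rw [SetLike.mem_coe, LinearMap.mem_ker, powpow, ← hw]
    congr 2; omega
  have S2 : ∀ w, (f ^ (m + n + 4)) w = 0 → (f ^ (m + 2)) w ∈ S := by
    intro w hw
    rw [hS]
    apply Submodule.mem_sup_right
    refine ⟨?_, ⟨w, rfl⟩⟩
    rw [SetLike.mem_coe, LinearMap.mem_ker, powpow, ← hw]
    congr 2; omega
  apply J.single_split _ j
  · intro k hk
    rw [comm_pow_apply (J.comm k)]
    have hne : t k ≠ m + n + 3 := fun h => hk ((hj k).1 h)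
    rcases Nat.lt_or_gt_of_ne hne with h | h
    · exact S1 _ (J.pow_t_pi v (by omega))
    · obtain ⟨w, hw⟩ := J.ker_pi h.le (hpk k)
      have e : (f ^ (m + 1)) (π k v) = (f ^ (m + 2)) ((f ^ (t k - (m + n + 3) - 1)) w) := by
        rw [hw, powpow, powpow]; congr 2; omega
      rw [e]
      apply S2
      rw [← hpk k, hw, powpow, powpow]; congr 2; omega
  · rw [comm_pow_apply (J.comm j)]
    obtain ⟨w, hw⟩ := J.split_cyc j v
    have htj := (hj j).2 rfl
    have hz : (f ^ (m + 1)) (f (π j w)) ∈ S := by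
      rw [← Module.End.mul_apply, ← pow_succ]; exact S2 _ (J.pow_t_pi w (by omega))
    have hfi : π j (f w) = f (π j w) := LinearMap.congr_fun (J.comm j).eq w
    have hpp : π j (π j v) = π j v := by
      obtain ⟨a, ha⟩ := J.cyc j v
      rw [ha, comm_aeval (J.comm j), J.fix]
    rcases hw with hw | hw
    · left
      rw [← hpp, hw, hfi]; exact hz
    · right
      rw [← hpp, hw, map_add, J.fix, hfi, map_add, add_sub_cancel_left]
      exact hz

lemma backward (J : JD f d t u π) {m n : ℕ} {i j : Fin d} (hi : ∀ k, t k = m + 1 ↔ k = i)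
    (hj : ∀ k, t k = m + n + 3 ↔ k = j) :
    ∃ Y : Submodule (ZMod 2) V, CharacteristicSubspace f Y ∧ ¬ HyperinvariantSubspace f Y := by
  have hti := (hi i).2 rfl
  have htj := (hj j).2 rfl
  have hij : i ≠ j := by rintro rfl; omega
  obtain ⟨S, hS⟩ : ∃ S : Submodule (ZMod 2) V,
    S = (LinearMap.ker (f ^ (n + 1)) ⊓ LinearMap.range (f ^ (m + 1))) ⊔
      (LinearMap.ker (f ^ (n + 2)) ⊓ LinearMap.range (f ^ (m + 2))) := ⟨_, rfl⟩
  obtain ⟨p, hp⟩ : ∃ p, p = (f ^ m) (u i) := ⟨_, rfl⟩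
  obtain ⟨q, hq⟩ : ∃ q, q = (f ^ (m + 1)) (u j) := ⟨_, rfl⟩
  obtain ⟨P, hP⟩ : ∃ P : Submodule (ZMod 2) V,
    P = LinearMap.ker f ⊓ LinearMap.range (f ^ (m + 1)) := ⟨_, rfl⟩
  -- commuting maps preserve intersections of kernels and images
  have hinv : ∀ g : Module.End (ZMod 2) V, Commute g f → ∀ (a b : ℕ) (x : V),
      x ∈ LinearMap.ker (f ^ a) ⊓ LinearMap.range (f ^ b) →
      g x ∈ LinearMap.ker (f ^ a) ⊓ LinearMap.range (f ^ b) := by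
    rintro g hg a b x ⟨h1, v, rfl⟩
    refine ⟨?_, g v, (comm_pow_apply hg b v).symm⟩
    rw [SetLike.mem_coe, LinearMap.mem_ker] at h1 ⊢
    rw [← comm_pow_apply hg, h1, map_zero]
  have hinvS : ∀ g : Module.End (ZMod 2) V, Commute g f → ∀ x ∈ S, g x ∈ S := by
    intro g hg x hx
    rw [hS] at hx ⊢
    obtain ⟨x1, h1, x2, h2, rfl⟩ := Submodule.mem_sup.1 hx
    rw [map_add]
    exact Submodule.add_mem_sup (hinv g hg _ _ _ h1) (hinv g hg _ _ _ h2)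
  have hinvP : ∀ g : Module.End (ZMod 2) V, Commute g f → ∀ x ∈ P, g x ∈ P := by
    intro g hg x hx
    rw [hP] at hx ⊢
    have := hinv g hg 1 (m + 1) x
    rw [pow_one] at this
    exact this hx
  have hPS : P ≤ S := by
    rw [hP, hS]
    refine le_trans ?_ le_sup_left
    rintro x ⟨h1, h2⟩
    refine ⟨?_, h2⟩
    rw [SetLike.mem_coe, LinearMap.mem_ker] at h1 ⊢
    rw [pow_succ, Module.End.mul_apply, h1, map_zero]
  have hpr : p ∉ LinearMap.range (f ^ (m + 1)) := by
    rintro ⟨v, hv⟩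
    have h1 := congrArg (π i) hv
    rw [comm_pow_apply (J.comm i), J.pow_t_pi v hti.le, hp, comm_pow_apply (J.comm i), J.fix] at h1
    have := J.pow_u.1 h1.symm
    omega
  have hSr : S ≤ LinearMap.range (f ^ (m + 1)) := by
    rw [hS]
    refine sup_le inf_le_right (le_trans inf_le_right ?_)
    rintro _ ⟨v, rfl⟩
    exact ⟨f v, by rw [← Module.End.mul_apply, ← pow_succ]⟩
  have hpS : p ∉ S := fun h => hpr (hSr h)
  have hpP : p ∉ P := fun h => hpS (hPS h)
  have hqS : q ∉ S := by
    intro h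
    rw [hS] at h
    obtain ⟨x1, ⟨h1, -⟩, x2, ⟨-, v, rfl⟩, h3⟩ := Submodule.mem_sup.1 h
    have h4 := congrArg (fun x => π j ((f ^ (n + 1)) x)) h3
    simp only [map_add] at h4
    rw [LinearMap.mem_ker.1 h1, map_zero, zero_add, powpow, comm_pow_apply (J.comm j),
      J.pow_t_pi v (by omega), hq, powpow, comm_pow_apply (J.comm j), J.fix] at h4
    have := J.pow_u.1 h4.symm
    omega
  have hfp : f p = 0 := by
    rw [hp, ← Module.End.mul_apply, ← pow_succ']; exact J.pow_u.2 hti.le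
  have hfq : f q ∈ S := by
    rw [hS]
    apply Submodule.mem_sup_right
    refine ⟨?_, u j, ?_⟩
    · rw [SetLike.mem_coe, LinearMap.mem_ker, hq, ← Module.End.mul_apply f, ← pow_succ', powpow]
      exact J.pow_u.2 (by omega)
    · rw [hq, ← Module.End.mul_apply f, ← pow_succ']
  refine ⟨S ⊔ Submodule.span (ZMod 2) {p + q}, ⟨?_, ?_⟩, ?_⟩
  · intro x hx
    obtain ⟨y, hy, z, hz, rfl⟩ := Submodule.mem_sup.1 hx
    obtain ⟨c, rfl⟩ := Submodule.mem_span_singleton.1 hz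
    apply Submodule.mem_sup_left
    rw [map_add, map_smul, map_add, hfp, zero_add]
    exact S.add_mem (hinvS f (Commute.refl f) _ hy) (S.smul_mem _ hfq)
  · intro g hgu hg x hx
    obtain ⟨g', hg'⟩ := hgu
    have hinvc : Commute (↑(g'⁻¹) : Module.End (ZMod 2) V) f := by
      rw [← hg'] at hg
      exact hg.units_inv_left
    have hgg : ∀ v, (↑(g'⁻¹) : Module.End (ZMod 2) V) (g v) = v := by
      intro v
      rw [← hg', ← Module.End.mul_apply, Units.inv_mul]; rfl
    have hgp : g p - p ∈ S := by
      apply hPS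
      rw [hP]
      have h0 : (f ^ (m + 1)) (g (u i)) = 0 := by
        rw [← comm_pow_apply hg, J.pow_u.2 hti.le, map_zero]
      have h1 := J.Pdec hi h0
      rw [← comm_pow_apply hg, ← hp, ← hP] at h1
      rcases h1 with h1 | h1
      · exfalso
        have := hinvP _ hinvc _ h1
        rw [hgg] at this
        exact hpP this
      · rw [← hP]; exact h1
    have hgq : g q - q ∈ S := by
      have h0 : (f ^ (m + n + 3)) (g (u j)) = 0 := by
        rw [← comm_pow_apply hg, J.pow_u.2 htj.le, map_zero]
      have h1 := J.Qdec hj h0 S hS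
      rw [← comm_pow_apply hg, ← hq] at h1
      rcases h1 with h1 | h1
      · exfalso
        have := hinvS _ hinvc _ h1
        rw [hgg] at this
        exact hqS this
      · exact h1
    obtain ⟨y, hy, z, hz, rfl⟩ := Submodule.mem_sup.1 hx
    obtain ⟨c, rfl⟩ := Submodule.mem_span_singleton.1 hz
    have e : g (y + c • (p + q)) = (g y + c • ((g p - p) + (g q - q))) + c • (p + q) := by
      rw [map_add, map_smul, map_add]
      module
    rw [e]
    exact Submodule.add_mem_sup
      (S.add_mem (hinvS g hg _ hy) (S.smul_mem _ (S.add_mem hgp hgq)))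
      (Submodule.smul_mem _ _ (Submodule.mem_span_singleton_self _))
  · intro hh
    have h1 := hh (π i) (J.comm i) (p + q)
      (Submodule.mem_sup_right (Submodule.mem_span_singleton_self _))
    have e : π i (p + q) = p := by
      rw [map_add, hp, hq, comm_pow_apply (J.comm i), comm_pow_apply (J.comm i), J.fix,
        J.pi_u_ne hij, map_zero, add_zero]
    rw [e] at h1
    obtain ⟨y, hy, z, hz, h⟩ := Submodule.mem_sup.1 h1
    obtain ⟨c, rfl⟩ := Submodule.mem_span_singleton.1 hz
    have h01 : ∀ c : ZMod 2, c = 0 ∨ c = 1 := by decide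
    rcases h01 c with rfl | rfl
    · rw [zero_smul, add_zero] at h
      exact hpS (h ▸ hy)
    · rw [one_smul] at h
      apply hqS
      have : q = -y := by
        have h' : p + (y + q) = p + 0 := by rw [add_zero]; nth_rewrite 2 [← h]; abel
        have := add_left_cancel h'
        exact eq_neg_of_add_eq_zero_right this
      rw [this]; exact S.neg_mem hy

end JD

/-- Shoda: For a nilpotent operator `f` on a finite-dimensional vector space
over `GF(2)`, there exists a characteristic non-hyperinvariant subspace iff for some
`r, s` with `s > r + 1` the Jordan form of `f` has exactly one block of size `s` and
exactly one block of size `r` (block counts expressed via kernel dimensions). -/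
theorem shoda_characterization
    {V : Type*} [AddCommGroup V] [Module (ZMod 2) V] [FiniteDimensional (ZMod 2) V]
    (f : Module.End (ZMod 2) V) (hf : IsNilpotent f) :
    (∃ Y : Submodule (ZMod 2) V,
        CharacteristicSubspace f Y ∧ ¬ HyperinvariantSubspace f Y) ↔
      ∃ r s : ℕ, 0 < r ∧ r + 1 < s ∧
        (2 * Module.finrank (ZMod 2) (LinearMap.ker (f ^ s)) =
          Module.finrank (ZMod 2) (LinearMap.ker (f ^ (s - 1))) +
          Module.finrank (ZMod 2) (LinearMap.ker (f ^ (s + 1))) + 1) ∧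
        (2 * Module.finrank (ZMod 2) (LinearMap.ker (f ^ r)) =
          Module.finrank (ZMod 2) (LinearMap.ker (f ^ (r - 1))) +
          Module.finrank (ZMod 2) (LinearMap.ker (f ^ (r + 1))) + 1) := by
  obtain ⟨d, t, u, π, J⟩ := exists_JD f hf
  constructor
  · rintro ⟨Y, hY, hn⟩
    by_contra hcon
    apply hn
    apply J.hyper hY
    intro i y hy
    refine J.allgood hY ?_ i hy
    intro a b ha hb hpos hlt
    apply hcon
    refine ⟨t a, t b, hpos, hlt, (J.count (by omega)).2 ⟨b, fun k => ⟨hb k, ?_⟩⟩,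
      (J.count hpos).2 ⟨a, fun k => ⟨ha k, ?_⟩⟩⟩
    · rintro rfl; rfl
    · rintro rfl; rfl
  · rintro ⟨r, s, hr, hrs, h1, h2⟩
    obtain ⟨j, hj⟩ := (J.count (by omega)).1 h1
    obtain ⟨i, hi⟩ := (J.count hr).1 h2
    obtain ⟨m, rfl⟩ : ∃ m, r = m + 1 := ⟨r - 1, by omega⟩
    obtain ⟨n, rfl⟩ : ∃ n, s = m + n + 3 := ⟨s - m - 3, by omega⟩
    exact J.backward hi hj
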